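/- Let R = k[x_1,…,x_d] with d ≥ 3 and let E be a torsion-free R-module of rank e and projective dimension one with μ(E) = d+e, minimal free resolution 0 → R^d →φ R^{d+e} → E → 0 where φ = [φ′ | φ″] with φ′ having d−2 columns of linear forms and φ″ two columns of quadrics, I_1(φ) = (x_1,…,x_d), and E satisfying G_d. Let A = H^0_m(S(E)) be the ideal with R(E) ≅ S(E)/A, m = (x_1,…,x_d). Then the T-module A_2 is generated by det B(φ), where B(φ) is a Jacobian dual of φ with respect to x_1,…,x_d, and this generator has bidegree (2,d). -/

import Mathlib

/-!
STATEMENT 9: With `R`, `E`, `φ` as in Statement 7 and `A = H⁰_m(S(E))` the ideal with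
`R(E) ≅ S(E)/A`, the `T`-module `A_2` is generated by `det B(φ)` for `B(φ)` a Jacobian
dual of `φ` with respect to `x_1,…,x_d`, and this generator has bidegree `(2,d)`.
-/

open MvPolynomial

noncomputable section

namespace Stmt9

variable (k : Type) [Field k] (d n : ℕ)

/-- `B = R ⊗_k T = k[x_1,…,x_d,y_1,…,y_n]`. -/
abbrev B := MvPolynomial (Fin d ⊕ Fin n) k

/-- `T = k[y_1,…,y_n]`. -/
abbrev T := MvPolynomial (Fin n) k

/-- `B` is a `T`-algebra via `y_j ↦ y_j`. -/
instance : Algebra (T k n) (B k d n) :=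
  ((rename Sum.inr : T k n →ₐ[k] B k d n).toRingHom).toAlgebra

/-- The bigrading weight: `bideg x_i = (1,0)`, `bideg y_j = (0,1)`. -/
def bwt : (Fin d ⊕ Fin n) → ℕ × ℕ := Sum.elim (fun _ => (1, 0)) (fun _ => (0, 1))

/-- The `x`-degree weight. -/
def wx : (Fin d ⊕ Fin n) → ℕ := Sum.elim (fun _ => 1) (fun _ => 0)

/-- The ideal `m = (x_1,…,x_d)B`. -/
def mxB : Ideal (B k d n) := Ideal.span (Set.range fun i : Fin d => (X (Sum.inl i) : B k d n))

variable (I : Ideal (B k d n))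

/-- `A = H⁰_m(S)`: elements of `S = B/I` annihilated by a power of `m`. -/
def H0 : Submodule (B k d n) (B k d n ⧸ I) :=
  ⨆ N : ℕ, Submodule.torsionBySet (B k d n) (B k d n ⧸ I)
    ((mxB k d n ^ N : Ideal (B k d n)) : Set (B k d n))

/-- The bigraded component of `S = B/I` in bidegree `p`. -/
def Scomp (p : ℕ × ℕ) : Submodule k (B k d n ⧸ I) :=
  (weightedHomogeneousSubmodule k (bwt d n) p).map (Ideal.Quotient.mkₐ k I).toLinearMap

/-- The graded strand `S_j = ⊕_b S_{(j,b)}` of `S` in `x`-degree `j`, as a `T`-module. -/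
def SxDeg (j : ℕ) : Submodule (T k n) (B k d n ⧸ I) :=
  Submodule.span (T k n) ((Ideal.Quotient.mk I) '' {g : B k d n | g.IsWeightedHomogeneous (wx d n) j})

/-- The graded strand of `S` in (possibly negative) `x`-degree `i : ℤ`. -/
def SxDegZ (i : ℤ) : Submodule (T k n) (B k d n ⧸ I) :=
  if 0 ≤ i then SxDeg k d n I i.toNat else ⊥

/-- The graded strand `A_i = ⊕_b A_{(i,b)}` of `A = H⁰_m(S)`, as a `T`-module. -/
def AcompZ (i : ℤ) : Submodule (T k n) (B k d n ⧸ I) :=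
  (H0 k d n I).restrictScalars (T k n) ⊓ SxDegZ k d n I i

/-- The graded component of `T` in (possibly negative) degree `j`. -/
def TcompZ (j : ℤ) : Submodule k (T k n) :=
  if 0 ≤ j then homogeneousSubmodule (Fin n) k j.toNat else ⊥

/-- The ideal of `t × t` minors of a matrix. -/
def minorsIdeal {R : Type} [CommRing R] {m' n' : Type} (M : Matrix m' n' R) (t : ℕ) :
    Ideal R :=
  Ideal.span {x | ∃ (f : Fin t → m') (g : Fin t → n'), x = (M.submatrix f g).det}

/-- `ht I ≥ c`: every prime containing `I` has height (= dimension of the localization)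
at least `c`. -/
def htGE {R : Type} [CommRing R] (I : Ideal R) (c : ℕ) : Prop :=
  ∀ (p : Ideal R) (_ : p.IsPrime), I ≤ p →
    (c : WithBot ℕ∞) ≤ ringKrullDim (Localization.AtPrime p)

/-!
Write `x = (x_1, …, x_d)` and `ℓ = (ℓ_1, …, ℓ_d) = x · B(φ)`.

By `G_d`, if a prime `P` of `R[y_1, …, y_n]` contains `m` of the linear forms `ℓ_j`, then
`m ≤ ht P`: for `p = P ∩ R` of height less than `m`, the condition bounds the corank of `φ` over
`κ(p)` by `ht p`, so the `m` forms contribute at least `m - ht p` independent linear forms over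
`κ(p)` and these raise the height of `P` above that of `pR[y]` accordingly. As the polynomial ring
is regular, hence locally a Cohen–Macaulay domain, `ℓ` is a regular sequence.

For regular sequences `x` and `ℓ = x · B(φ)`, Wiebe's theorem gives
`(ℓ) : (x) = (ℓ) + (det B(φ))`. Hence an element of `A` of `x`-degree exceeding that of `det B(φ)`
vanishes, by induction on the power of `m` which kills it: if `m` kills it, it is a multiple of
`det B(φ)` by an element of `m`. So `m` kills every element of `A` whose `x`-degree is that of
`det B(φ)`, and the multiplier of `det B(φ)` then has `x`-degree zero, i.e. lies in `T`.
-/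

section Koszul

open ExteriorAlgebra RingTheory.Sequence Matrix

variable {A : Type*} [CommRing A] {n : ℕ}

lemma isWeaklyRegular_append_singleton_iff (rs : List A) (r : A) :
    IsWeaklyRegular A (rs ++ [r]) ↔
      IsWeaklyRegular A rs ∧ IsSMulRegular (A ⧸ Ideal.ofList rs) r := by
  rw [isWeaklyRegular_append_iff, isWeaklyRegular_singleton_iff, smul_eq_mul, Ideal.mul_top]

lemma ofList_ofFn (x : Fin n → A) : Ideal.ofList (List.ofFn x) = Ideal.span (Set.range x) :=
  congrArg Ideal.span (Set.ext fun _ => List.mem_ofFn)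

lemma mem_smul_of_smul_mem_of_isSMulRegular {M : Type*} [AddCommGroup M] [Module A M]
    {N : Submodule A M} [Module.Flat A N] {J : Ideal A} {r : A}
    (hr : IsSMulRegular (A ⧸ J) r) {m : M} (hm : m ∈ N) (hrm : r • m ∈ J • N) : m ∈ J • N := by
  have hreg : IsSMulRegular (N ⧸ (J • ⊤ : Submodule A N)) r :=
    ((TensorProduct.quotTensorEquivQuotSMul N J).isSMulRegular_congr r).1 (hr.rTensor N)
  lift m to N using hm
  rw [← Submodule.mem_smul_top_iff]
  exact (isSMulRegular_quotient_iff_mem_of_smul_mem _ _).1 hreg m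
    ((Submodule.mem_smul_top_iff J N (r • m)).2 hrm)

lemma mem_sup_span_singleton_smul_iff {M : Type*} [AddCommGroup M] [Module A M] {J : Ideal A}
    {r : A} {N : Submodule A M} {m : M} :
    m ∈ (J ⊔ Ideal.span {r}) • N ↔ ∃ η ∈ N, m - r • η ∈ J • N := by
  rw [Submodule.sup_smul, Submodule.ideal_span_singleton_smul, Submodule.mem_sup]
  constructor
  · rintro ⟨y, hy, z, hz, rfl⟩
    obtain ⟨η, hη, rfl⟩ := (Submodule.mem_smul_pointwise_iff_exists _ _ _).1 hz
    exact ⟨η, hη, by simpa using hy⟩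
  · rintro ⟨η, hη, h⟩
    exact ⟨_, h, r • η, Submodule.smul_mem_pointwise_smul _ _ _ hη, by simp⟩

lemma map_mem_smul_of_mapsTo {M M' : Type*} [AddCommGroup M] [Module A M] [AddCommGroup M']
    [Module A M'] (f : M →ₗ[A] M') {N : Submodule A M} {N' : Submodule A M'}
    (hf : Set.MapsTo f N N') (J : Ideal A) {z : M} (hz : z ∈ J • N) : f z ∈ J • N' := by
  have hz' : f z ∈ (J • N).map f := Submodule.mem_map_of_mem hz
  rw [Submodule.map_smul''] at hz'
  exact Submodule.smul_mono le_rfl (Submodule.map_le_iff_le_comap.2 hf) hz'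

/-- The differential `ζ ↦ x ∧ ζ` of the cohomological Koszul complex `⋀ Aⁿ` of `x`. -/
def koszulDifferential (x : Fin n → A) :
    ExteriorAlgebra A (Fin n → A) →ₗ[A] ExteriorAlgebra A (Fin n → A) :=
  LinearMap.mulLeft A (ι A x)

/-- The contraction of exterior forms along the linear functional `v ↦ b ⬝ᵥ v`. -/
def contraction (b : Fin n → A) :
    ExteriorAlgebra A (Fin n → A) →ₗ[A] ExteriorAlgebra A (Fin n → A) :=
  CliffordAlgebra.contractLeft (Q := (0 : QuadraticForm A (Fin n → A))) (dotProductEquiv A _ b)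

/-- The coboundaries of the Koszul complex of `x` in degree `i`. -/
def koszulCoboundaries (x : Fin n → A) : ℕ → Submodule A (ExteriorAlgebra A (Fin n → A))
  | 0 => ⊥
  | i + 1 => (⋀[A]^i (Fin n → A)).map (koszulDifferential x)

/-- The `i`-th cohomology of the Koszul complex of `x` with coefficients in `A ⧸ J` is generated
by the class of `ω`; for `ω = 0` this says that it vanishes. -/
def KoszulCohomologyGeneratedBy (x : Fin n → A) (J : Ideal A) (i : ℕ)
    (ω : ExteriorAlgebra A (Fin n → A)) : Prop :=
  ∀ ζ ∈ ⋀[A]^i (Fin n → A), koszulDifferential x ζ ∈ J • ⋀[A]^(i + 1) (Fin n → A) →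
    ∃ h : A, ζ - h • ω ∈ J • ⋀[A]^i (Fin n → A) ⊔ koszulCoboundaries x i

lemma koszulDifferential_comp_self (x : Fin n → A) (ζ : ExteriorAlgebra A (Fin n → A)) :
    koszulDifferential x (koszulDifferential x ζ) = 0 := by
  rw [koszulDifferential, LinearMap.mulLeft_apply, LinearMap.mulLeft_apply, ← mul_assoc,
    ι_sq_zero, zero_mul]

lemma koszulDifferential_mapsTo (x : Fin n → A) (i : ℕ) :
    Set.MapsTo (koszulDifferential x) (⋀[A]^i (Fin n → A)) (⋀[A]^(i + 1) (Fin n → A)) := by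
  intro ζ hζ
  rw [SetLike.mem_coe, exteriorPower, pow_succ']
  exact Submodule.mul_mem_mul ⟨x, rfl⟩ hζ

lemma koszulDifferential_eq_zero_of_mem_koszulCoboundaries {x : Fin n → A} {i : ℕ}
    {β : ExteriorAlgebra A (Fin n → A)} (hβ : β ∈ koszulCoboundaries x i) :
    koszulDifferential x β = 0 := by
  cases i with
  | zero => rw [(Submodule.mem_bot A).1 hβ, map_zero]
  | succ i =>
    obtain ⟨θ, -, rfl⟩ := hβ
    exact koszulDifferential_comp_self x θ

lemma contraction_koszulDifferential (b x : Fin n → A) (ζ : ExteriorAlgebra A (Fin n → A)) :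
    contraction b (koszulDifferential x ζ) =
      (b ⬝ᵥ x) • ζ - koszulDifferential x (contraction b ζ) :=
  CliffordAlgebra.contractLeft_ι_mul (Q := (0 : QuadraticForm A (Fin n → A))) _ x ζ

lemma contraction_contraction (b : Fin n → A) (ζ : ExteriorAlgebra A (Fin n → A)) :
    contraction b (contraction b ζ) = 0 :=
  CliffordAlgebra.contractLeft_contractLeft (Q := (0 : QuadraticForm A (Fin n → A))) _ ζ

lemma contraction_eq_zero_of_mem_zero (b : Fin n → A) {ζ : ExteriorAlgebra A (Fin n → A)}
    (hζ : ζ ∈ ⋀[A]^0 (Fin n → A)) : contraction b ζ = 0 := by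
  obtain ⟨r, rfl⟩ := Submodule.mem_one.1 hζ
  exact CliffordAlgebra.contractLeft_algebraMap (Q := (0 : QuadraticForm A (Fin n → A))) _ r

lemma contraction_mapsTo (b : Fin n → A) (i : ℕ) :
    Set.MapsTo (contraction b) (⋀[A]^(i + 1) (Fin n → A)) (⋀[A]^i (Fin n → A)) := by
  have hstep (i : ℕ) (h : ∀ x, ∀ ζ ∈ ⋀[A]^i (Fin n → A),
      koszulDifferential x (contraction b ζ) ∈ ⋀[A]^i (Fin n → A)) :
      Set.MapsTo (contraction b) (⋀[A]^(i + 1) (Fin n → A)) (⋀[A]^i (Fin n → A)) := by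
    intro ζ hζ
    rw [SetLike.mem_coe, exteriorPower, pow_succ'] at hζ
    refine Submodule.mul_induction_on hζ ?_ fun y z hy hz => by
      rw [map_add]; exact add_mem hy hz
    rintro _ ⟨x, rfl⟩ z hz
    change contraction b (koszulDifferential x z) ∈ _
    rw [contraction_koszulDifferential]
    exact sub_mem (Submodule.smul_mem _ _ hz) (h x z hz)
  induction i with
  | zero =>
    refine hstep 0 fun x ζ hζ => ?_
    rw [contraction_eq_zero_of_mem_zero b hζ, map_zero]
    exact zero_mem _
  | succ i ih => exact hstep (i + 1) fun x ζ hζ => koszulDifferential_mapsTo x i (ih hζ)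

lemma algebraMap_mem_exteriorPower_zero (z : A) :
    algebraMap A (ExteriorAlgebra A (Fin n → A)) z ∈ ⋀[A]^0 (Fin n → A) :=
  Submodule.algebraMap_mem z

lemma KoszulCohomologyGeneratedBy.sup_span_singleton {x : Fin n → A} {J : Ideal A} {r : A}
    {i : ℕ} {ω ω' : ExteriorAlgebra A (Fin n → A)} (hr : IsSMulRegular (A ⧸ J) r)
    (hgen : KoszulCohomologyGeneratedBy x J (i + 1) ω)
    (hvanish : KoszulCohomologyGeneratedBy x J i 0) (hω : ω' ∈ ⋀[A]^i (Fin n → A))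
    (hωω' : koszulDifferential x ω' - r • ω ∈ J • ⋀[A]^(i + 1) (Fin n → A)) :
    KoszulCohomologyGeneratedBy x (J ⊔ Ideal.span {r}) i ω' := by
  intro ζ hζ hdζ
  obtain ⟨η, hη, hζη⟩ := mem_sup_span_singleton_smul_iff.1 hdζ
  have hdη : koszulDifferential x η ∈ J • ⋀[A]^(i + 1 + 1) (Fin n → A) := by
    refine mem_smul_of_smul_mem_of_isSMulRegular hr (koszulDifferential_mapsTo x _ hη) ?_
    have h := map_mem_smul_of_mapsTo _ (koszulDifferential_mapsTo x _) J hζη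
    rwa [map_sub, koszulDifferential_comp_self, zero_sub, neg_mem_iff, map_smul] at h
  obtain ⟨h, hh⟩ := hgen η hη hdη
  obtain ⟨α, hα, _, ⟨θ, hθ, rfl⟩, hαθ⟩ := Submodule.mem_sup.1 hh
  have hηθ : η - h • ω - koszulDifferential x θ ∈ J • ⋀[A]^(i + 1) (Fin n → A) := by
    rwa [← hαθ, add_sub_cancel_right]
  have hcocycle : koszulDifferential x (ζ - h • ω' - r • θ) ∈
      J • ⋀[A]^(i + 1) (Fin n → A) := by
    convert sub_mem (add_mem hζη (Submodule.smul_mem _ r hηθ)) (Submodule.smul_mem _ h hωω') using 1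
    simp only [map_sub, map_smul]
    module
  obtain ⟨_, hc⟩ := hvanish _ (sub_mem (sub_mem hζ (Submodule.smul_mem _ h hω))
    (Submodule.smul_mem _ r hθ)) hcocycle
  rw [smul_zero, sub_zero] at hc
  refine ⟨h, ?_⟩
  have hle : J • ⋀[A]^i (Fin n → A) ≤ (J ⊔ Ideal.span {r}) • ⋀[A]^i (Fin n → A) :=
    Submodule.smul_mono_left le_sup_left
  rw [← sub_add_cancel (ζ - h • ω') (r • θ)]
  refine add_mem (sup_le_sup_right hle _ hc) ?_
  exact Submodule.mem_sup_left <|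
    Submodule.smul_mem_smul (Ideal.mem_sup_right (Ideal.mem_span_singleton_self r)) hθ

lemma koszulCohomologyGeneratedBy_zero_zero {x b : Fin n → A} {J : Ideal A}
    (hr : IsSMulRegular (A ⧸ J) (b ⬝ᵥ x)) : KoszulCohomologyGeneratedBy x J 0 0 := by
  intro ζ hζ hdζ
  have h := map_mem_smul_of_mapsTo _ (contraction_mapsTo b 0) J hdζ
  rw [contraction_koszulDifferential, contraction_eq_zero_of_mem_zero b hζ, map_zero,
    sub_zero] at h
  refine ⟨0, Submodule.mem_sup_left ?_⟩
  rw [smul_zero, sub_zero]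
  exact mem_smul_of_smul_mem_of_isSMulRegular hr hζ h

lemma KoszulCohomologyGeneratedBy.of_sup_span_dotProduct {x b : Fin n → A} {J : Ideal A} {i : ℕ}
    (hr : IsSMulRegular (A ⧸ J) (b ⬝ᵥ x))
    (hvanish : KoszulCohomologyGeneratedBy x (J ⊔ Ideal.span {b ⬝ᵥ x}) i 0) :
    KoszulCohomologyGeneratedBy x J (i + 1) 0 := by
  intro ζ hζ hdζ
  have hbζ := map_mem_smul_of_mapsTo _ (contraction_mapsTo b (i + 1)) J hdζ
  rw [contraction_koszulDifferential] at hbζ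
  obtain ⟨_, hβ⟩ := hvanish (contraction b ζ) (contraction_mapsTo b i hζ)
    (mem_sup_span_singleton_smul_iff.2 ⟨ζ, hζ, by rwa [← neg_mem_iff, neg_sub]⟩)
  rw [smul_zero, sub_zero] at hβ
  obtain ⟨α, hα, β, hβ, hαβ⟩ := Submodule.mem_sup.1 hβ
  obtain ⟨ξ, hξ, hαξ⟩ := mem_sup_span_singleton_smul_iff.1 hα
  have hdξ := map_mem_smul_of_mapsTo _ (koszulDifferential_mapsTo x i) J hαξ
  have hdαβ := congrArg (koszulDifferential x) hαβ
  rw [map_add, koszulDifferential_eq_zero_of_mem_koszulCoboundaries hβ, add_zero] at hdαβ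
  refine ⟨0, ?_⟩
  rw [smul_zero, sub_zero, ← sub_add_cancel ζ (koszulDifferential x ξ)]
  refine add_mem (Submodule.mem_sup_left ?_) (Submodule.mem_sup_right ⟨ξ, hξ, rfl⟩)
  refine mem_smul_of_smul_mem_of_isSMulRegular hr
    (sub_mem hζ (koszulDifferential_mapsTo x i hξ)) ?_
  convert add_mem hbζ hdξ using 1
  rw [map_sub, map_smul, hdαβ]
  module

lemma koszulCohomologyGeneratedBy_zero_of_isWeaklyRegular {x : Fin n → A}
    (hx : IsWeaklyRegular A (List.ofFn x)) {i j : ℕ} (hij : i + j < n) :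
    KoszulCohomologyGeneratedBy x (Ideal.ofList ((List.ofFn x).take j)) i 0 := by
  have hdot (j : ℕ) (hj : j < n) :
      (Pi.single ⟨j, hj⟩ 1 : Fin n → A) ⬝ᵥ x = (List.ofFn x)[j]'(by simpa) := by simp
  have hreg (j : ℕ) (hj : j < n) : IsSMulRegular (A ⧸ Ideal.ofList ((List.ofFn x).take j))
      ((Pi.single ⟨j, hj⟩ 1 : Fin n → A) ⬝ᵥ x) := by
    have h := hx.regular_mod_prev j (by simpa)
    rwa [smul_eq_mul, Ideal.mul_top, ← hdot j hj] at h
  induction i generalizing j with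
  | zero => exact koszulCohomologyGeneratedBy_zero_zero (hreg j (by omega))
  | succ i ih =>
    refine .of_sup_span_dotProduct (hreg j (by omega)) ?_
    rw [hdot, ← Ideal.ofList_singleton, ← Ideal.ofList_append, List.take_append_getElem]
    exact ih (by omega)

lemma koszulCohomologyGeneratedBy_zero_of_length_lt {x : Fin n → A}
    (hx : IsWeaklyRegular A (List.ofFn x)) {rs : List A} (hrs : IsWeaklyRegular A rs) {i : ℕ}
    (hi : i + rs.length < n) : KoszulCohomologyGeneratedBy x (Ideal.ofList rs) i 0 := by
  induction rs using List.reverseRecOn generalizing i with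
  | nil =>
    simpa using koszulCohomologyGeneratedBy_zero_of_isWeaklyRegular hx (i := i) (j := 0) hi
  | append_singleton rs r ih =>
    rw [List.length_append, List.length_singleton] at hi
    obtain ⟨hrs, hr⟩ := (isWeaklyRegular_append_singleton_iff rs r).1 hrs
    rw [Ideal.ofList_append, Ideal.ofList_singleton]
    refine .sup_span_singleton hr (ih hrs (by omega)) (ih hrs (by omega)) (zero_mem _) ?_
    rw [map_zero, smul_zero, sub_zero]
    exact zero_mem _

lemma mem_of_algebraMap_mem_smul_exteriorPower_zero {J : Ideal A} {z : A}
    (hz : algebraMap A (ExteriorAlgebra A (Fin n → A)) z ∈ J • ⋀[A]^0 (Fin n → A)) : z ∈ J := by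
  have h := map_mem_smul_of_mapsTo (algebraMapInv (R := A) (M := Fin n → A)).toLinearMap
    (N' := ⊤) (Set.mapsTo_univ _ _) J hz
  rwa [AlgHom.toLinearMap_apply, algebraMap_leftInverse, smul_eq_mul, Ideal.mul_top] at h

lemma koszulDifferential_algebraMap_mem {x : Fin n → A} {J : Ideal A} {z : A}
    (hz : ∀ i, x i * z ∈ J) :
    koszulDifferential x (algebraMap A _ z) ∈ J • ⋀[A]^(0 + 1) (Fin n → A) := by
  have hzx : z • x ∈ J • (⊤ : Submodule A (Fin n → A)) := by
    rw [pi_eq_sum_univ' x, Finset.smul_sum]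
    refine sum_mem fun i _ => ?_
    rw [smul_smul, mul_comm]
    exact Submodule.smul_mem_smul (hz i) trivial
  have h := map_mem_smul_of_mapsTo (ι A) (N' := ⋀[A]^(0 + 1) (Fin n → A))
    (fun v _ => by simp [exteriorPower]) J hzx
  rwa [map_smul, Algebra.smul_def, Algebra.commutes] at h

/-- Depth sensitivity in the style of Rees. -/
lemma mem_ofList_of_forall_mul_mem {x : Fin n → A} (hx : IsWeaklyRegular A (List.ofFn x))
    {rs : List A} (hrs : IsWeaklyRegular A rs) (hlen : rs.length < n) {z : A}
    (hz : ∀ i, x i * z ∈ Ideal.ofList rs) : z ∈ Ideal.ofList rs := by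
  obtain ⟨_, h⟩ := koszulCohomologyGeneratedBy_zero_of_length_lt hx hrs (i := 0) (by simpa)
    (algebraMap A _ z) (algebraMap_mem_exteriorPower_zero z)
    (koszulDifferential_algebraMap_mem hz)
  refine mem_of_algebraMap_mem_smul_exteriorPower_zero (n := n) ?_
  simpa [koszulCoboundaries] using h

variable (A n) in
/-- The volume form `e₁ ∧ ⋯ ∧ eₙ` of `Aⁿ`. -/
def volumeForm : ExteriorAlgebra A (Fin n → A) := ιMulti A n fun i => Pi.single i 1

/-- The action of `⋀ Aⁿ` on itself by contraction, extending `contraction`. -/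
def contractionAction :
    ExteriorAlgebra A (Fin n → A) →ₐ[A] Module.End A (ExteriorAlgebra A (Fin n → A)) :=
  lift A ⟨CliffordAlgebra.contractLeft (Q := (0 : QuadraticForm A (Fin n → A))) ∘ₗ
    (dotProductEquiv A (Fin n)).toLinearMap,
    fun b => LinearMap.ext fun ζ => contraction_contraction b ζ⟩

lemma contractionAction_ι (b : Fin n → A) : contractionAction (ι A b) = contraction b := by
  simp [contractionAction, contraction]

/-- The volume form contracted along the vectors of the list, the last one first. -/
def contractedVolumeForm (bs : List (Fin n → A)) : ExteriorAlgebra A (Fin n → A) :=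
  contractionAction (bs.map (ι A)).prod (volumeForm A n)

lemma contractedVolumeForm_nil : contractedVolumeForm [] = volumeForm A n := by
  simp [contractedVolumeForm]

lemma contractedVolumeForm_cons (b : Fin n → A) (bs : List (Fin n → A)) :
    contractedVolumeForm (b :: bs) = contraction b (contractedVolumeForm bs) := by
  simp [contractedVolumeForm, contractionAction_ι]

lemma contractedVolumeForm_mem (bs : List (Fin n → A)) {i : ℕ} (hi : i + bs.length = n) :
    contractedVolumeForm bs ∈ ⋀[A]^i (Fin n → A) := by
  induction bs generalizing i with
  | nil =>
    obtain rfl : i = n := hi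
    rw [contractedVolumeForm_nil]
    exact ιMulti_range A i ⟨_, rfl⟩
  | cons b bs ih =>
    rw [contractedVolumeForm_cons]
    exact contraction_mapsTo b i (ih (by simp at hi; omega))

lemma koszulDifferential_volumeForm (x : Fin n → A) :
    koszulDifferential x (volumeForm A n) = 0 := by
  rw [koszulDifferential, LinearMap.mulLeft_apply, volumeForm, ιMulti_apply, pi_eq_sum_univ' x,
    map_sum, Finset.sum_mul]
  refine Finset.sum_eq_zero fun i _ => ?_
  rw [map_smul, smul_mul_assoc]
  exact (congrArg _ (ι_mul_prod_list (fun j => (Pi.single j 1 : Fin n → A)) i)).trans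
    (smul_zero _)

lemma alternatingMap_apply_eq_basisDet_smul {ι M N : Type*} [Fintype ι] [DecidableEq ι]
    [AddCommGroup M] [Module A M] [AddCommGroup N] [Module A N] (e : Module.Basis ι A M)
    (f : M [⋀^ι]→ₗ[A] N) (v : ι → M) : f v = e.det v • f e := by
  have h : f = (LinearMap.toSpanSingleton A N (f e)).compAlternatingMap e.det := by
    refine e.ext_alternating fun i hi => ?_
    let σ : Equiv.Perm ι := Equiv.ofBijective i (Finite.injective_iff_bijective.1 hi)
    change f (e ∘ σ) = e.det (e ∘ σ) • f e
    rw [AlternatingMap.map_perm, AlternatingMap.map_perm, e.det_self, smul_assoc, one_smul]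
  exact congrArg (· v) h

lemma alternatingMap_apply_eq_det_smul {N : Type*} [AddCommGroup N] [Module A N]
    (f : (Fin n → A) [⋀^Fin n]→ₗ[A] N) (v : Fin n → Fin n → A) :
    f v = (Matrix.of v).det • f fun i => Pi.single i 1 := by
  convert alternatingMap_apply_eq_basisDet_smul (Pi.basisFun A (Fin n)) f v using 2
  · exact (Pi.basisFun_det_apply (Matrix.of v)).symm
  · congr 1
    ext i
    simp

lemma exists_eq_smul_volumeForm {ζ : ExteriorAlgebra A (Fin n → A)}
    (hζ : ζ ∈ ⋀[A]^n (Fin n → A)) : ∃ h : A, ζ = h • volumeForm A n := by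
  have hle : ⋀[A]^n (Fin n → A) ≤ Submodule.span A {volumeForm A n} := by
    rw [← ιMulti_span_fixedDegree, Submodule.span_le]
    rintro _ ⟨v, rfl⟩
    rw [alternatingMap_apply_eq_det_smul]
    exact Submodule.smul_mem _ _ (Submodule.mem_span_singleton_self _)
  obtain ⟨h, rfl⟩ := Submodule.mem_span_singleton.1 (hle hζ)
  exact ⟨h, rfl⟩

lemma koszulDifferential_contractedVolumeForm_mem (x : Fin n → A) (bs : List (Fin n → A)) {i : ℕ}
    (hi : i + bs.length = n) :
    koszulDifferential x (contractedVolumeForm bs) ∈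
      Ideal.ofList (bs.map (· ⬝ᵥ x)).reverse • ⋀[A]^(i + 1) (Fin n → A) := by
  induction bs generalizing i with
  | nil =>
    rw [contractedVolumeForm_nil, koszulDifferential_volumeForm]
    exact zero_mem _
  | cons b bs ih =>
    rw [List.length_cons] at hi
    have h := map_mem_smul_of_mapsTo _ (contraction_mapsTo b (i + 1)) _
      (ih (i := i + 1) (by omega))
    rw [contraction_koszulDifferential] at h
    rw [List.map_cons, List.reverse_cons, Ideal.ofList_append, Ideal.ofList_singleton,
      contractedVolumeForm_cons]
    exact mem_sup_span_singleton_smul_iff.2 ⟨_, contractedVolumeForm_mem bs (by omega),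
      by rwa [← neg_mem_iff, neg_sub]⟩

lemma koszulCohomologyGeneratedBy_contractedVolumeForm {x : Fin n → A}
    (hx : IsWeaklyRegular A (List.ofFn x)) {bs : List (Fin n → A)}
    (hbs : IsWeaklyRegular A (bs.map (· ⬝ᵥ x)).reverse) {i : ℕ} (hi : i + bs.length = n) :
    KoszulCohomologyGeneratedBy x (Ideal.ofList (bs.map (· ⬝ᵥ x)).reverse) i
      (contractedVolumeForm bs) := by
  induction bs generalizing i with
  | nil =>
    obtain rfl : i = n := hi
    intro ζ hζ _
    obtain ⟨h, rfl⟩ := exists_eq_smul_volumeForm hζ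
    refine ⟨h, ?_⟩
    rw [contractedVolumeForm_nil, sub_self]
    exact zero_mem _
  | cons b bs ih =>
    rw [List.length_cons] at hi
    rw [List.map_cons, List.reverse_cons] at hbs ⊢
    obtain ⟨hbs, hb⟩ := (isWeaklyRegular_append_singleton_iff _ _).1 hbs
    rw [Ideal.ofList_append, Ideal.ofList_singleton]
    refine .sup_span_singleton hb (ih hbs (by omega))
      (koszulCohomologyGeneratedBy_zero_of_length_lt hx hbs (by simp; omega))
      (contractedVolumeForm_mem _ (by simp; omega)) ?_
    have h := map_mem_smul_of_mapsTo _ (contraction_mapsTo b (i + 1)) _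
      (koszulDifferential_contractedVolumeForm_mem x bs (i := i + 1) (by omega))
    rw [contraction_koszulDifferential] at h
    rwa [contractedVolumeForm_cons, ← neg_mem_iff, neg_sub]

lemma exists_contractedVolumeForm_eq_smul_det (v : Fin n → Fin n → A) :
    ∃ c : A, contractedVolumeForm (List.ofFn v).reverse =
      algebraMap A _ (c * (Matrix.of v).det) := by
  let f : (Fin n → A) [⋀^Fin n]→ₗ[A] ExteriorAlgebra A (Fin n → A) :=
    (LinearMap.applyₗ (volumeForm A n) ∘ₗ contractionAction.toLinearMap ∘ₗ
      CliffordAlgebra.reverse (Q := 0)).compAlternatingMap (ιMulti A n)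
  have hf (w : Fin n → Fin n → A) : f w = contractedVolumeForm (List.ofFn w).reverse := by
    have h : CliffordAlgebra.reverse (Q := 0) (ιMulti A n w) =
        ((List.ofFn w).reverse.map (ι A)).prod := by
      rw [ιMulti_apply, List.map_reverse, ← CliffordAlgebra.reverse_prod_map_ι, List.map_ofFn]
      rfl
    exact congrArg (contractionAction · (volumeForm A n)) h
  obtain ⟨c, hc⟩ := Submodule.mem_one.1 <|
    contractedVolumeForm_mem (i := 0) (List.ofFn fun i => (Pi.single i 1 : Fin n → A)).reverse
      (by simp)
  refine ⟨c, ?_⟩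
  rw [← hf, alternatingMap_apply_eq_det_smul, hf, ← hc, mul_comm, map_mul, Algebra.smul_def]

lemma exists_sub_mul_det_mem_span {x y : Fin n → A} {M : Matrix (Fin n) (Fin n) A}
    (hM : y = x ᵥ* M) (hx : IsWeaklyRegular A (List.ofFn x)) (hy : IsWeaklyRegular A (List.ofFn y))
    {g : A} (hg : ∀ i, x i * g ∈ Ideal.span (Set.range y)) :
    ∃ c, g - c * M.det ∈ Ideal.span (Set.range y) := by
  have hmap : ((List.ofFn M.col).reverse.map (· ⬝ᵥ x)).reverse = List.ofFn y := by
    rw [List.map_reverse, List.reverse_reverse, List.map_ofFn, hM]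
    exact congrArg List.ofFn (funext fun j => dotProduct_comm _ _)
  rw [← ofList_ofFn, ← hmap] at hg ⊢
  rw [← hmap] at hy
  obtain ⟨h, hh⟩ := koszulCohomologyGeneratedBy_contractedVolumeForm hx hy (i := 0) (by simp)
    (algebraMap A _ g) (algebraMap_mem_exteriorPower_zero g) (koszulDifferential_algebraMap_mem hg)
  obtain ⟨c, hc⟩ := exists_contractedVolumeForm_eq_smul_det M.col
  have hdet : (Matrix.of M.col).det = M.det := M.det_transpose
  rw [hc, hdet] at hh
  refine ⟨h * c, mem_of_algebraMap_mem_smul_exteriorPower_zero (n := n) ?_⟩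
  rwa [koszulCoboundaries, sup_bot_eq, Algebra.smul_def (A := ExteriorAlgebra A _) h, ← map_mul,
    ← map_sub, ← mul_assoc] at hh

lemma mul_det_mem_span_range_vecMul {m : Type*} [Fintype m] [DecidableEq m] (x : m → A)
    (M : Matrix m m A) (i : m) : x i * M.det ∈ Ideal.span (Set.range (x ᵥ* M)) := by
  have h : (x ᵥ* M ᵥ* M.adjugate) i = x i * M.det := by
    rw [vecMul_vecMul, mul_adjugate, vecMul_smul, vecMul_one, Pi.smul_apply, smul_eq_mul, mul_comm]
  rw [← h]
  exact sum_mem fun j _ => Ideal.mul_mem_right _ _ (Ideal.subset_span ⟨j, rfl⟩)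

/-- Wiebe's theorem. -/
theorem colon_span_range_vecMul {x : Fin n → A} {M : Matrix (Fin n) (Fin n) A}
    (hx : IsWeaklyRegular A (List.ofFn x)) (hxM : IsWeaklyRegular A (List.ofFn (x ᵥ* M))) :
    (Ideal.span (Set.range (x ᵥ* M))).colon (Set.range x) =
      Ideal.span (Set.range (x ᵥ* M)) ⊔ Ideal.span {M.det} := by
  refine le_antisymm (fun g hg => ?_) (sup_le Ideal.le_colon ?_)
  · obtain ⟨c, hc⟩ := exists_sub_mul_det_mem_span rfl hx hxM fun i => by
      simpa only [smul_eq_mul, mul_comm] using Submodule.mem_colon.1 hg _ ⟨i, rfl⟩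
    exact Submodule.mem_sup.2 ⟨_, hc, _, Ideal.mem_span_singleton'.2 ⟨c, rfl⟩, sub_add_cancel _ _⟩
  · rw [Ideal.span_singleton_le_iff_mem, Submodule.mem_colon]
    rintro _ ⟨i, rfl⟩
    rw [smul_eq_mul, mul_comm]
    exact mul_det_mem_span_range_vecMul x M i

end Koszul

section RegularLocalRing

open IsLocalRing RingTheory.Sequence Pointwise

lemma exists_isPrime_ringKrullDim_quotient_eq (R : Type*) [CommRing R] [FiniteRingKrullDim R] :
    ∃ q : Ideal R, q.IsPrime ∧ ringKrullDim (R ⧸ q) = ringKrullDim R := by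
  let s := LTSeries.longestOf (PrimeSpectrum R)
  refine ⟨s.head.asIdeal, s.head.isPrime, le_antisymm
    (ringKrullDim_le_of_surjective _ Ideal.Quotient.mk_surjective) ?_⟩
  rw [ringKrullDim_quotient, ringKrullDim, Order.krullDim_eq_length_of_finiteDimensionalOrder]
  exact Order.le_krullDim_iff.2
    ⟨⟨s.length, fun i => ⟨s i, LTSeries.head_le s i⟩, fun i => s.step i⟩, rfl⟩

variable {R : Type*} [CommRing R] [IsLocalRing R]

lemma isLocalRing_quotient {I : Ideal R} (hI : I ≠ ⊤) : IsLocalRing (R ⧸ I) :=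
  have := Ideal.Quotient.nontrivial_iff.2 hI
  .of_surjective' _ Ideal.Quotient.mk_surjective

lemma map_maximalIdeal_quotient {I : Ideal R} [IsLocalRing (R ⧸ I)] :
    (maximalIdeal R).map (Ideal.Quotient.mk I) = maximalIdeal (R ⧸ I) := by
  have := IsLocalHom.of_surjective (Ideal.Quotient.mk I) Ideal.Quotient.mk_surjective
  have hI : I ≠ ⊤ := Ideal.Quotient.nontrivial_iff.1 inferInstance
  ext x
  obtain ⟨x, rfl⟩ := Ideal.Quotient.mk_surjective x
  simp [sup_eq_left.2 (le_maximalIdeal hI)]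

variable [IsNoetherianRing R]

lemma ringKrullDim_quotient_le_ringKrullDim_quotient_sup_span_singleton_add_one (I : Ideal R)
    {r : R} (hr : r ∈ maximalIdeal R) :
    ringKrullDim (R ⧸ I) ≤ ringKrullDim (R ⧸ I ⊔ Ideal.span {r}) + 1 := by
  by_cases hI : I = ⊤
  · have := Ideal.Quotient.subsingleton_iff.2 hI
    rw [ringKrullDim_eq_bot_of_subsingleton]
    exact bot_le
  have := isLocalRing_quotient hI
  have hmem : Ideal.Quotient.mk I r ∈ maximalIdeal (R ⧸ I) :=
    map_maximalIdeal_quotient (I := I) ▸ Ideal.mem_map_of_mem _ hr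
  have h := ringKrullDim_le_ringKrullDim_quotient_add_card {Ideal.Quotient.mk I r}
    (by simpa [ringJacobson_eq_maximalIdeal])
  rwa [Finset.card_singleton, Nat.cast_one, Finset.coe_singleton, ← Set.image_singleton,
    ← Ideal.map_span, ringKrullDim_eq_of_ringEquiv (DoubleQuot.quotQuotEquivQuotSup _ _)] at h

lemma isDomain_of_isDomain_quotient_span_singleton {r : R} [IsDomain (R ⧸ Ideal.span {r})]
    (hr : r ∈ maximalIdeal R)
    (hdim : ringKrullDim (R ⧸ Ideal.span {r}) < ringKrullDim R) : IsDomain R := by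
  obtain ⟨q, hq, hdimq⟩ := exists_isPrime_ringKrullDim_quotient_eq R
  have hrq : r ∉ q := fun h => by
    have hle : Ideal.span {r} ≤ q := (Ideal.span_singleton_le_iff_mem _).2 h
    exact (ringKrullDim_le_of_surjective _ (Ideal.Quotient.factor_surjective hle)).not_gt
      (hdimq ▸ hdim)
  have hqr : q ≤ Ideal.span {r} := by
    intro s hs
    by_contra hsr
    have h := ringKrullDim_succ_le_of_surjective (r := Ideal.Quotient.mk _ s)
      (Ideal.Quotient.factor (le_sup_right : Ideal.span {r} ≤ q ⊔ Ideal.span {r}))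
      (Ideal.Quotient.factor_surjective _)
      (mem_nonZeroDivisors_of_ne_zero (mt Ideal.Quotient.eq_zero_iff_mem.1 hsr))
      (Ideal.Quotient.eq_zero_iff_mem.2 (Ideal.mem_sup_left hs))
    have h' :=
      ringKrullDim_quotient_le_ringKrullDim_quotient_sup_span_singleton_add_one q hr
    exact (h'.trans h).not_gt (hdimq ▸ hdim)
  have hle : q ≤ maximalIdeal R • q := by
    intro s hs
    obtain ⟨a, rfl⟩ := Ideal.mem_span_singleton'.1 (hqr hs)
    rw [mul_comm]
    exact Submodule.smul_mem_smul hr ((hq.mem_or_mem hs).resolve_right hrq)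
  obtain rfl : q = ⊥ := Submodule.eq_bot_of_le_smul_of_le_jacobson_bot _ q
    (IsNoetherian.noetherian q) hle (maximalIdeal_le_jacobson _)
  exact IsDomain.of_bot_isPrime R

lemma ringKrullDim_le_length_of_maximalIdeal_eq_ofList {rs : List R}
    (hm : maximalIdeal R = Ideal.ofList rs) : ringKrullDim R ≤ rs.length := by
  classical
  have hspan : Ideal.ofList rs = Ideal.span (rs.toFinset : Set R) :=
    congrArg Ideal.span rs.coe_toFinset.symm
  refine (ringKrullDim_le_spanFinrank_maximalIdeal R).trans ?_
  rw [hm, hspan]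
  refine Nat.mono_cast ?_
  refine (Submodule.spanFinrank_span_le_ncard_of_finite (R := R) (M := R)
    rs.toFinset.finite_toSet).trans ?_
  rw [Set.ncard_coe_finset]
  exact rs.toFinset_card_le

lemma isWeaklyRegular_cons_iff_map_quotient {A : Type*} [CommRing A] (r : A) (rs : List A) :
    IsWeaklyRegular A (r :: rs) ↔ IsSMulRegular A r ∧
      IsWeaklyRegular (A ⧸ Ideal.span {r}) (rs.map (Ideal.Quotient.mk (Ideal.span {r}))) := by
  have h : r • (⊤ : Submodule A A) = Ideal.span {r} := by
    rw [← Submodule.ideal_span_singleton_smul, smul_eq_mul, Ideal.mul_top]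
  rw [isWeaklyRegular_cons_iff, (Submodule.quotEquivOfEq _ _ h).isWeaklyRegular_congr,
    ← Ideal.Quotient.algebraMap_eq, isWeaklyRegular_map_algebraMap_iff]

lemma isDomain_and_isWeaklyRegular_of_maximalIdeal_eq_ofList {rs : List R}
    (hm : maximalIdeal R = Ideal.ofList rs) (hdim : rs.length ≤ ringKrullDim R) :
    IsDomain R ∧ IsWeaklyRegular R rs := by
  induction h : rs.length generalizing R with
  | zero =>
    obtain rfl := List.eq_nil_of_length_eq_zero h
    have hbot : (⊥ : Ideal R).IsPrime := by
      rw [← Ideal.ofList_nil, ← hm]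
      infer_instance
    exact ⟨.of_bot_isPrime R, .nil R R⟩
  | succ c ih =>
    obtain ⟨r, rs, rfl⟩ := List.exists_cons_of_length_eq_add_one h
    have hr : r ∈ maximalIdeal R := hm ▸ Ideal.subset_span List.mem_cons_self
    have := isLocalRing_quotient (I := Ideal.span {r})
      (mt Ideal.span_singleton_eq_top.1 hr)
    have hm' : maximalIdeal (R ⧸ Ideal.span {r}) =
        Ideal.ofList (rs.map (Ideal.Quotient.mk (Ideal.span {r}))) := by
      rw [← map_maximalIdeal_quotient, hm, Ideal.ofList_cons, Ideal.map_sup,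
        Ideal.map_quotient_self, bot_sup_eq, Ideal.map_ofList]
    have hle := ringKrullDim_le_length_of_maximalIdeal_eq_ofList hm'
    have hge : (rs.length : WithBot ℕ∞) ≤ ringKrullDim (R ⧸ Ideal.span {r}) := by
      have h := ringKrullDim_le_ringKrullDim_quotient_add_card {r}
        (by simpa [ringJacobson_eq_maximalIdeal])
      rw [Finset.card_singleton, Nat.cast_one, Finset.coe_singleton] at h
      refine ENat.WithBot.add_le_add_one_right_iff.1 (le_trans ?_ (hdim.trans h))
      exact_mod_cast le_rfl
    rw [List.length_map] at hle
    have hlt : ringKrullDim (R ⧸ Ideal.span {r}) < ringKrullDim R := by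
      refine hle.trans_lt (lt_of_lt_of_le ?_ hdim)
      norm_cast
      exact Nat.lt_succ_self _
    obtain ⟨_, hreg⟩ := ih hm' (by rwa [List.length_map]) (by simpa using h)
    have := isDomain_of_isDomain_quotient_span_singleton hr hlt
    refine ⟨this, (isWeaklyRegular_cons_iff_map_quotient r rs).2 ⟨.of_ne_zero ?_, hreg⟩⟩
    rintro rfl
    rw [Ideal.span_singleton_zero,
      ringKrullDim_eq_of_ringEquiv (RingEquiv.quotientBot R)] at hlt
    exact hlt.false

end RegularLocalRing

section RegularRing

open IsLocalRing RingTheory.Sequence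

lemma mem_ofList_of_forall_mem_maximalIdeal {S : Type*} [CommRing S] [IsRegularLocalRing S]
    {rs : List S} (hrs : IsWeaklyRegular S rs) (hlen : rs.length < ringKrullDim S) {z : S}
    (hz : ∀ a ∈ maximalIdeal S, a * z ∈ Ideal.ofList rs) : z ∈ Ideal.ofList rs := by
  obtain ⟨s, hcard, hs⟩ := Submodule.FG.exists_span_finset_card_eq_spanFinrank
    (maximalIdeal S).fg_of_isNoetherianRing
  have hm : maximalIdeal S = Ideal.ofList s.toList := by
    rw [← hs]
    exact congrArg Ideal.span (Set.ext fun _ => Finset.mem_toList.symm)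
  have hdim : (s.toList.length : WithBot ℕ∞) = ringKrullDim S := by
    rw [s.length_toList, hcard, IsRegularLocalRing.spanFinrank_maximalIdeal]
  have hreg := (isDomain_and_isWeaklyRegular_of_maximalIdeal_eq_ofList hm hdim.le).2
  rw [← List.ofFn_get s.toList] at hreg
  refine mem_ofList_of_forall_mul_mem hreg hrs ?_ fun i => hz _ ?_
  · rw [← hdim] at hlen
    exact_mod_cast hlen
  · rw [hm]
    exact Ideal.subset_span (List.get_mem _ i)

lemma exists_isPrime_colon_of_not_isSMulRegular {A : Type*} [CommRing A] [IsNoetherianRing A]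
    {J : Ideal A} {r : A} (hr : ¬ IsSMulRegular (A ⧸ J) r) :
    ∃ w, (J.colon {w}).IsPrime ∧ r ∈ J.colon {w} := by
  rw [isSMulRegular_iff_right_eq_zero_of_smul] at hr
  push Not at hr
  obtain ⟨z, hrz, hz⟩ := hr
  obtain ⟨P, hP, hle⟩ := exists_le_isAssociatedPrime_of_isNoetherianRing A z hz
  obtain ⟨hprime, w, rfl⟩ := isAssociatedPrime_iff.1 hP
  obtain ⟨w, rfl⟩ := Ideal.Quotient.mk_surjective w
  have hcolon : (⊥ : Submodule A (A ⧸ J)).colon {Ideal.Quotient.mk J w} = J.colon {w} := by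
    ext a
    rw [Submodule.mem_colon_singleton, Submodule.mem_colon_singleton, Submodule.mem_bot]
    exact Submodule.Quotient.mk_eq_zero J
  rw [hcolon] at hprime hle
  exact ⟨w, hprime, hle (Submodule.mem_colon_singleton.2 hrz)⟩

theorem isWeaklyRegular_of_forall_length_le_height {A : Type*} [CommRing A] [IsRegularRing A]
    {rs : List A} (h : ∀ rs', rs' <+: rs → ∀ P : Ideal A, P.IsPrime → Ideal.ofList rs' ≤ P →
      rs'.length ≤ P.height) : IsWeaklyRegular A rs := by
  induction rs using List.reverseRecOn with
  | nil => exact .nil A A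
  | append_singleton rs r ih =>
    have hrs := ih fun rs' hrs' => h rs' (hrs'.trans (List.prefix_append rs [r]))
    refine (isWeaklyRegular_append_singleton_iff rs r).2 ⟨hrs, ?_⟩
    by_contra hr
    -- Localizing at the associated prime `P` contradicts depth sensitivity, as `rs` is too short.
    obtain ⟨w, hP, hrP⟩ := exists_isPrime_colon_of_not_isSMulRegular hr
    set P := (Ideal.ofList rs).colon {w}
    have hle : Ideal.ofList rs ≤ P := fun s hs =>
      Submodule.mem_colon_singleton.2 (Ideal.mul_mem_right w _ hs)
    have hht := h _ List.prefix_rfl P hP <| by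
      rw [Ideal.ofList_append, Ideal.ofList_singleton]
      exact sup_le hle ((Ideal.span_singleton_le_iff_mem _).2 hrP)
    let φ := algebraMap A (Localization.AtPrime P)
    have hw : φ w ∈ Ideal.ofList (rs.map φ) := by
      refine mem_ofList_of_forall_mem_maximalIdeal (hrs.of_isLocalization _ P.primeCompl) ?_ ?_
      · rw [List.length_map, IsLocalization.AtPrime.ringKrullDim_eq_height P]
        rw [List.length_append, List.length_singleton] at hht
        exact WithBot.coe_lt_coe.2 (lt_of_lt_of_le (by exact_mod_cast Nat.lt_succ_self _) hht)
      · rw [← Ideal.map_ofList, ← Localization.AtPrime.map_eq_maximalIdeal]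
        intro a ha
        refine Submodule.mem_colon_singleton.1 ((Ideal.map_le_iff_le_comap.2 ?_ :
          P.map φ ≤ ((Ideal.ofList rs).map φ).colon {φ w}) ha)
        intro s hs
        have hsw := Ideal.mem_map_of_mem φ (Submodule.mem_colon_singleton.1 hs)
        exact Submodule.mem_colon_singleton.2 (by rwa [smul_eq_mul, ← map_mul])
    rw [← Ideal.map_ofList, IsLocalization.algebraMap_mem_map_algebraMap_iff P.primeCompl] at hw
    obtain ⟨s, hs, hsw⟩ := hw
    exact hs (Submodule.mem_colon_singleton.2 hsw)

end RegularRing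

section HeightOfLinearForms

lemma height_comap_algebraMap_le {A S : Type*} [CommRing A] [IsNoetherianRing A] [CommRing S]
    [Algebra A S] [IsNoetherianRing S] [Algebra.HasGoingDown A S] (Q : Ideal S) [Q.IsPrime] :
    (Q.comap (algebraMap A S)).height ≤ Q.height := by
  have : Q.LiesOver (Q.comap (algebraMap A S)) := ⟨rfl⟩
  rw [Ideal.height_eq_height_add_of_liesOver_of_hasGoingDown (Q.comap (algebraMap A S)) Q]
  exact le_self_add

lemma height_comap_C_add_one_le {A : Type*} [CommRing A] [IsNoetherianRing A]
    {Q : Ideal (Polynomial A)} [Q.IsPrime] {f : Polynomial A} (hf : f ∈ Q) {i : ℕ}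
    (hi : f.coeff i ∉ Q.comap Polynomial.C) : (Q.comap Polynomial.C).height + 1 ≤ Q.height := by
  set q := Q.comap Polynomial.C
  have hcomap : (q.map Polynomial.C).comap (algebraMap A (Polynomial A)) = q :=
    le_antisymm (Ideal.comap_mono Ideal.map_comap_le) Ideal.le_comap_map
  have hlt : q.map Polynomial.C < Q :=
    Ideal.map_comap_le.lt_of_ne fun h => hi (Ideal.mem_map_C_iff.1 (h ▸ hf) i)
  have hle := height_comap_algebraMap_le (A := A) (q.map Polynomial.C)
  rw [hcomap] at hle
  exact (add_le_add_left hle 1).trans (Ideal.height_add_one_le_of_lt_of_isPrime hlt)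

variable {R : Type*} [CommRing R] {N : ℕ}

/-- The coefficient vectors of the linear forms lying in the ideal `P`. -/
def linearFormsIn {σ : Type*} [Fintype σ] (P : Ideal (MvPolynomial σ R)) : Submodule R (σ → R) :=
  (P.restrictScalars R).comap (Fintype.linearCombination R X)

lemma mem_linearFormsIn {σ : Type*} [Fintype σ] {P : Ideal (MvPolynomial σ R)} {v : σ → R} :
    v ∈ linearFormsIn P ↔ ∑ i, C (v i) * X i ∈ P := by
  simp [linearFormsIn, Fintype.linearCombination_apply, MvPolynomial.smul_eq_C_mul]

variable {K : Type*} [Field K] (κ : R →+* K)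

/-- The subspace spanned by the images under `κ` of the linear forms lying in the ideal `P`. -/
def linearFormsSpan {σ : Type*} [Fintype σ] (P : Ideal (MvPolynomial σ R)) :
    Submodule K (σ → K) :=
  Submodule.span K ((κ ∘ ·) '' (linearFormsIn P : Set (σ → R)))

lemma comp_mem_map_vecCons_linearFormsSpan {P : Ideal (MvPolynomial (Fin (N + 1)) R)}
    (hκ : RingHom.ker κ ≤ P.comap C) {v : Fin (N + 1) → R} (hv : v ∈ linearFormsIn P)
    (hv0 : κ (v 0) = 0) :
    κ ∘ v ∈ (linearFormsSpan κ (P.comap (rename Fin.succ).toRingHom)).map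
      (LinearMap.vecCons 0 LinearMap.id) := by
  refine ⟨κ ∘ Fin.tail v, Submodule.subset_span ⟨_, mem_linearFormsIn.2 ?_, rfl⟩, ?_⟩
  · rw [mem_linearFormsIn, Fin.sum_univ_succ] at hv
    have := (Ideal.add_mem_iff_right P (P.mul_mem_right (X 0) (hκ hv0))).1 hv
    simpa [Fin.tail] using this
  · ext i
    cases i using Fin.cases <;> simp [hv0, Fin.tail]

lemma finrank_linearFormsSpan_le_of_forall_eq_zero {P : Ideal (MvPolynomial (Fin (N + 1)) R)}
    (hκ : RingHom.ker κ ≤ P.comap C) (h : ∀ v ∈ linearFormsIn P, κ (v 0) = 0) :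
    Module.finrank K (linearFormsSpan κ P) ≤
      Module.finrank K (linearFormsSpan κ (P.comap (rename Fin.succ).toRingHom)) := by
  refine (Submodule.finrank_mono ?_).trans
    (Submodule.finrank_map_le (LinearMap.vecCons 0 LinearMap.id) _)
  refine Submodule.span_le.2 ?_
  rintro _ ⟨v, hv, rfl⟩
  exact comp_mem_map_vecCons_linearFormsSpan κ hκ hv (h v hv)

lemma finrank_linearFormsSpan_le_add_one {P : Ideal (MvPolynomial (Fin (N + 1)) R)}
    (hκ : RingHom.ker κ ≤ P.comap C) {u : Fin (N + 1) → R} (hu : u ∈ linearFormsIn P)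
    (hu0 : κ (u 0) ≠ 0) :
    Module.finrank K (linearFormsSpan κ P) ≤
      Module.finrank K (linearFormsSpan κ (P.comap (rename Fin.succ).toRingHom)) + 1 := by
  set W := (linearFormsSpan κ (P.comap (rename Fin.succ).toRingHom)).map
      (LinearMap.vecCons 0 LinearMap.id)
  have hle : linearFormsSpan κ P ≤ W ⊔ Submodule.span K {κ ∘ u} := by
    refine Submodule.span_le.2 ?_
    rintro _ ⟨v, hv, rfl⟩
    have hw := comp_mem_map_vecCons_linearFormsSpan κ hκ (v := u 0 • v - v 0 • u)
      (sub_mem (Submodule.smul_mem _ _ hv) (Submodule.smul_mem _ _ hu)) (by simp [mul_comm])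
    have hsplit : κ ∘ v = (κ (u 0))⁻¹ • (κ ∘ (u 0 • v - v 0 • u)) +
        ((κ (u 0))⁻¹ * κ (v 0)) • (κ ∘ u) := by
      ext i
      simp
      field_simp
      ring
    change κ ∘ v ∈ _
    rw [hsplit]
    exact Submodule.add_mem_sup (W.smul_mem _ hw)
      (Submodule.smul_mem _ _ (Submodule.mem_span_singleton_self _))
  calc Module.finrank K (linearFormsSpan κ P)
      ≤ Module.finrank K ↥(W ⊔ Submodule.span K {κ ∘ u}) := Submodule.finrank_mono hle
    _ ≤ Module.finrank K W + Module.finrank K (Submodule.span K {κ ∘ u}) :=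
      Submodule.finrank_add_le_finrank_add_finrank _ _
    _ ≤ _ := add_le_add (Submodule.finrank_map_le _ _) <|
      (finrank_span_singleton fun h => hu0 (congrFun h 0)).le

lemma finSuccEquiv_rename_succ (a : MvPolynomial (Fin N) R) :
    finSuccEquiv R N (rename Fin.succ a) = Polynomial.C a := by
  have : (finSuccEquiv R N).toAlgHom.comp (rename Fin.succ) = Polynomial.CAlgHom :=
    algHom_ext fun i => by simp [finSuccEquiv_X_succ]
  exact DFunLike.congr_fun this a

lemma comap_C_comap_finSuccEquiv_symm (P : Ideal (MvPolynomial (Fin (N + 1)) R)) :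
    (P.comap ((finSuccEquiv R N).symm : _ →+* _)).comap Polynomial.C =
      P.comap (rename Fin.succ).toRingHom := by
  ext a
  simp [Ideal.mem_comap, ← finSuccEquiv_rename_succ]

lemma height_comap_rename_succ_le [IsNoetherianRing R]
    (P : Ideal (MvPolynomial (Fin (N + 1)) R)) [P.IsPrime] :
    (P.comap (rename Fin.succ).toRingHom).height ≤ P.height := by
  rw [← comap_C_comap_finSuccEquiv_symm,
    ← (finSuccEquiv R N).symm.toRingEquiv.height_comap P]
  exact height_comap_algebraMap_le (A := MvPolynomial (Fin N) R) _

lemma height_comap_rename_succ_add_one_le [IsNoetherianRing R]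
    {P : Ideal (MvPolynomial (Fin (N + 1)) R)} [P.IsPrime] {u : Fin (N + 1) → R}
    (hu : u ∈ linearFormsIn P) (hu0 : C (u 0) ∉ P) :
    (P.comap (rename Fin.succ).toRingHom).height + 1 ≤ P.height := by
  rw [← comap_C_comap_finSuccEquiv_symm,
    ← (finSuccEquiv R N).symm.toRingEquiv.height_comap P]
  have hcoeff : (finSuccEquiv R N (∑ i, C (u i) * X i)).coeff 1 = C (u 0) := by
    have hC (a : R) : finSuccEquiv R N (C a) = Polynomial.C (C a) :=
      (finSuccEquiv R N).commutes a
    simp [Fin.sum_univ_succ, finSuccEquiv_X_zero, finSuccEquiv_X_succ, hC, Polynomial.coeff_C]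
  refine height_comap_C_add_one_le
    (f := finSuccEquiv R N (∑ i, C (u i) * X i)) (i := 1) ?_ ?_
  · simpa [Ideal.mem_comap] using mem_linearFormsIn.1 hu
  · rw [hcoeff, comap_C_comap_finSuccEquiv_symm]
    simpa [Ideal.mem_comap] using hu0

theorem height_comap_C_add_finrank_linearFormsSpan_le [IsNoetherianRing R]
    (P : Ideal (MvPolynomial (Fin N) R)) [P.IsPrime] (hκ : RingHom.ker κ = P.comap C) :
    (P.comap C).height + Module.finrank K (linearFormsSpan κ P) ≤ P.height := by
  induction N with
  | zero =>
    rw [Module.finrank_zero_of_subsingleton, Nat.cast_zero, add_zero]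
    exact height_comap_algebraMap_le P
  | succ N ih =>
    set P' := P.comap (rename Fin.succ).toRingHom
    have hP' : P'.comap C = P.comap C := by
      ext a
      simp [P', Ideal.mem_comap]
    have ih := ih P' (hκ.trans hP'.symm)
    rw [hP'] at ih
    by_cases h : ∀ u ∈ linearFormsIn P, κ (u 0) = 0
    · calc _ ≤ (P.comap C).height + Module.finrank K (linearFormsSpan κ P') := by
            gcongr
            exact finrank_linearFormsSpan_le_of_forall_eq_zero κ hκ.le h
        _ ≤ P.height := ih.trans (height_comap_rename_succ_le P)
    · push Not at h
      obtain ⟨u, hu, hu0⟩ := h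
      calc _ ≤ (P.comap C).height + (Module.finrank K (linearFormsSpan κ P') + 1) := by
            gcongr
            exact_mod_cast finrank_linearFormsSpan_le_add_one κ hκ.le hu hu0
        _ ≤ P'.height + 1 := by
            rw [← add_assoc]
            gcongr
        _ ≤ P.height := height_comap_rename_succ_add_one_le hu fun h0 => hu0 (hκ.ge h0)

end HeightOfLinearForms

section GeneratorsAndRank

variable {R E : Type*} [CommRing R] [AddCommGroup E] [Module R E]

lemma finrank_le_card_of_span_localizedModule_eq_top {p : Ideal R} [p.IsPrime]
    {U : Type*} [AddCommGroup U] [Module R U] [Module p.ResidueField U]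
    [IsScalarTower R p.ResidueField U] {g : E →ₗ[R] U}
    (hg : Submodule.span p.ResidueField (Set.range g) = ⊤)
    {s : Finset (LocalizedModule p.primeCompl E)}
    (hs : Submodule.span (Localization.AtPrime p) (s : Set (LocalizedModule p.primeCompl E)) = ⊤) :
    Module.finrank p.ResidueField U ≤ s.card := by
  classical
  let _ : Module (Localization.AtPrime p) U :=
    Module.compHom U (algebraMap (Localization.AtPrime p) p.ResidueField)
  have : IsScalarTower (Localization.AtPrime p) p.ResidueField U :=
    .of_algebraMap_smul fun _ _ => rfl
  have : IsScalarTower R (Localization.AtPrime p) U := .of_algebraMap_smul fun r u => by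
    rw [← algebraMap_smul p.ResidueField, ← IsScalarTower.algebraMap_apply, algebraMap_smul]
  have := isLocalizedModule_id p.primeCompl U (Localization.AtPrime p)
  let gp : LocalizedModule p.primeCompl E →ₗ[Localization.AtPrime p] U :=
    (IsLocalizedModule.lift p.primeCompl (LocalizedModule.mkLinearMap p.primeCompl E) g
      (IsLocalizedModule.map_units LinearMap.id)).extendScalarsOfIsLocalization p.primeCompl _
  have hgp (x : E) : gp (LocalizedModule.mkLinearMap p.primeCompl E x) = g x :=
    IsLocalizedModule.lift_apply _ _ _ (IsLocalizedModule.map_units LinearMap.id) x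
  have hrange : ∀ y, gp y ∈ Submodule.span p.ResidueField (s.image gp : Set U) := fun y => by
    have hy : gp y ∈ (Submodule.span (Localization.AtPrime p) (s : Set _)).map gp :=
      ⟨y, hs ▸ trivial, rfl⟩
    rw [Submodule.map_span, ← Finset.coe_image] at hy
    exact Submodule.span_le_restrictScalars (Localization.AtPrime p) p.ResidueField _ hy
  have htop : Submodule.span p.ResidueField (s.image gp : Set U) = ⊤ := by
    rw [eq_top_iff, ← hg, Submodule.span_le]
    rintro _ ⟨x, rfl⟩
    exact hgp x ▸ hrange _
  rw [← finrank_top, ← htop]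
  exact (finrank_span_finset_le_card _).trans Finset.card_image_le

lemma card_le_card_add_rank_map_residueField {ι ν : Type*} [Fintype ι] [Fintype ν]
    {φ : Matrix ι ν R} {π : (ι → R) →ₗ[R] E} (hsurj : Function.Surjective π)
    (hker : LinearMap.ker π = LinearMap.range φ.mulVecLin) {p : Ideal R} [p.IsPrime]
    {s : Finset (LocalizedModule p.primeCompl E)}
    (hs : Submodule.span (Localization.AtPrime p) (s : Set (LocalizedModule p.primeCompl E)) = ⊤) :
    Fintype.card ι ≤ s.card + (φ.map (algebraMap R p.ResidueField)).rank := by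
  classical
  set K := p.ResidueField
  set V := LinearMap.range (φ.map (algebraMap R K)).mulVecLin
  let f : (ι → R) →ₗ[R] (ι → K) ⧸ V :=
    (V.mkQ.restrictScalars R) ∘ₗ (Algebra.linearMap R K).compLeft ι
  have hf : LinearMap.ker π ≤ LinearMap.ker f := by
    rw [hker]
    rintro _ ⟨x, rfl⟩
    refine (Submodule.Quotient.mk_eq_zero V).2 ⟨algebraMap R K ∘ x, ?_⟩
    funext i
    exact (RingHom.map_mulVec (algebraMap R K) φ x i).symm
  let g : E →ₗ[R] (ι → K) ⧸ V :=
    (LinearMap.ker π).liftQ f hf ∘ₗ (π.quotKerEquivOfSurjective hsurj).symm.toLinearMap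
  have hg : Submodule.span K (Set.range g) = ⊤ := by
    have hgπ (v : ι → R) : g (π v) = V.mkQ (algebraMap R K ∘ v) :=
      congrArg ((LinearMap.ker π).liftQ f hf) (π.quotKerEquivOfSurjective_symm_apply hsurj v)
    have hbasis : Set.range (Pi.basisFun K ι) ⊆ V.mkQ ⁻¹' Set.range g := by
      rintro _ ⟨i, rfl⟩
      refine ⟨π (Pi.single i 1), (hgπ _).trans (congrArg V.mkQ ?_)⟩
      ext j
      simp [Pi.single_apply, apply_ite (algebraMap R K)]
    rw [eq_top_iff, ← V.range_mkQ, LinearMap.range_eq_map, ← (Pi.basisFun K ι).span_eq,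
      Submodule.map_span]
    exact Submodule.span_mono (Set.image_subset_iff.2 hbasis)
  calc Fintype.card ι = Module.finrank K ((ι → K) ⧸ V) + Module.finrank K V := by
        rw [Submodule.finrank_quotient_add_finrank, Module.finrank_fintype_fun_eq_card]
    _ ≤ _ := Nat.add_le_add_right (finrank_le_card_of_span_localizedModule_eq_top hg hs) _

lemma rank_map_algebraMap_of_injective {K ι ν : Type*} [Field K] [Algebra R K] [IsFractionRing R K]
    [Finite ι] [Fintype ν] {φ : Matrix ι ν R} (hinj : Function.Injective φ.mulVecLin) :
    (φ.map (algebraMap R K)).rank = Fintype.card ν := by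
  have := Fintype.ofFinite ι
  have hcol : LinearIndependent R φ.col := Matrix.mulVec_injective_iff.1 hinj
  have hcolK : LinearIndependent R (φ.map (algebraMap R K)).col :=
    hcol.map' ((Algebra.linearMap R K).compLeft ι) (LinearMap.ker_eq_bot.2
      ((IsFractionRing.injective R K).comp_left))
  rw [← Matrix.rank_transpose]
  exact ((LinearIndependent.iff_fractionRing R K).1 hcolK).rank_matrix

lemma rank_le_finrank_add_card_of_col_mem {K ι ν : Type*} [Field K] [Finite ι] [Fintype ν]
    (M : Matrix ι ν K) {V : Submodule K (ι → K)} {s : Finset ν} (h : ∀ j ∉ s, M.col j ∈ V) :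
    M.rank ≤ Module.finrank K V + s.card := by
  classical
  have hle : Submodule.span K (Set.range M.col) ≤
      V ⊔ Submodule.span K (s.image M.col : Set (ι → K)) := by
    rw [Submodule.span_le]
    rintro _ ⟨j, rfl⟩
    by_cases hj : j ∈ s
    · exact Submodule.mem_sup_right (Submodule.subset_span (Finset.mem_image_of_mem _ hj))
    · exact Submodule.mem_sup_left (h j hj)
  rw [Matrix.rank_eq_finrank_span_cols]
  calc
    _ ≤ Module.finrank K V + Module.finrank K (Submodule.span K (s.image M.col : Set (ι → K))) :=
      (Submodule.finrank_mono hle).trans (Submodule.finrank_add_le_finrank_add_finrank _ _)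
    _ ≤ _ := Nat.add_le_add_left ((finrank_span_finset_le_card _).trans Finset.card_image_le) _

end GeneratorsAndRank

section ConditionG

universe u

variable {R : Type u} {E : Type*} [CommRing R] [AddCommGroup E] [Module R E]

variable (R E) in
/-- The condition `G_s` on a module `E` of rank `e`: `μ(E_p) ≤ ht p + e - 1` for all primes `p`
with `1 ≤ ht p ≤ s - 1`. The number of generators is bounded through a spanning finite set, and the
height is written as `dim R_p`. -/
def SatisfiesG (e s : ℕ) : Prop :=
  ∀ (p : Ideal R) (_ : p.IsPrime) (c : ℕ),
    ringKrullDim (Localization.AtPrime p) = (c : WithBot ℕ∞) → 1 ≤ c → c ≤ s - 1 →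
    ∃ t : Finset (LocalizedModule p.primeCompl E), t.card ≤ c + e - 1 ∧
      Submodule.span (Localization.AtPrime p) (t : Set (LocalizedModule p.primeCompl E)) = ⊤

variable [IsDomain R] {n e s : ℕ} {φ : Matrix (Fin (n + e)) (Fin n) R}
  {π : (Fin (n + e) → R) →ₗ[R] E}

lemma SatisfiesG.exists_field_le_height_add_rank (hG : SatisfiesG R E e s)
    (hinj : Function.Injective φ.mulVecLin) (hsurj : Function.Surjective π)
    (hker : LinearMap.ker π = LinearMap.range φ.mulVecLin) (p : Ideal R) [p.IsPrime]
    (hp : p.height < s) :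
    ∃ (K : Type u) (_ : Field K) (κ : R →+* K),
      RingHom.ker κ = p ∧ n ≤ p.height + (φ.map κ).rank := by
  obtain ⟨c, hc⟩ := ENat.ne_top_iff_exists.1 hp.ne_top
  rw [← hc] at hp ⊢
  obtain rfl | hc0 := c.eq_zero_or_pos
  · obtain rfl := Ideal.height_eq_zero_iff_eq_bot.1 hc.symm
    refine ⟨FractionRing R, inferInstance, algebraMap R _,
      (RingHom.injective_iff_ker_eq_bot _).1 (IsFractionRing.injective R _), ?_⟩
    simp [rank_map_algebraMap_of_injective hinj]
  · have hdim : ringKrullDim (Localization.AtPrime p) = (c : WithBot ℕ∞) := by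
      rw [IsLocalization.AtPrime.ringKrullDim_eq_height p, ← hc]
      rfl
    obtain ⟨t, htcard, ht⟩ :=
      hG p inferInstance c hdim hc0 (Nat.le_sub_one_of_lt (by exact_mod_cast hp))
    have hrank := card_le_card_add_rank_map_residueField hsurj hker ht
    rw [Fintype.card_fin] at hrank
    refine ⟨p.ResidueField, inferInstance, algebraMap R _, p.ker_algebraMap_residueField, ?_⟩
    norm_cast
    omega

theorem SatisfiesG.card_le_height [IsNoetherianRing R] (hG : SatisfiesG R E e s)
    (hinj : Function.Injective φ.mulVecLin) (hsurj : Function.Surjective π)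
    (hker : LinearMap.ker π = LinearMap.range φ.mulVecLin) {J : Finset (Fin n)} (hJ : J.card ≤ s)
    {P : Ideal (MvPolynomial (Fin (n + e)) R)} [P.IsPrime]
    (hP : ∀ j ∈ J, φ.col j ∈ linearFormsIn P) : (J.card : ℕ∞) ≤ P.height := by
  by_cases hcard : (J.card : ℕ∞) ≤ (P.comap C).height
  · exact hcard.trans (height_comap_algebraMap_le P)
  have hlt : (P.comap C).height < s := (not_le.1 hcard).trans_le (by exact_mod_cast hJ)
  obtain ⟨K, _, κ, hκ, hrank⟩ := hG.exists_field_le_height_add_rank hinj hsurj hker _ hlt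
  have hcols : (φ.map κ).rank ≤ Module.finrank K (linearFormsSpan κ P) + Jᶜ.card :=
    rank_le_finrank_add_card_of_col_mem _ fun j hj =>
      Submodule.subset_span ⟨φ.col j, hP j (by simpa using hj), rfl⟩
  have hcompl : J.card + Jᶜ.card = n := by rw [Finset.card_add_card_compl, Fintype.card_fin]
  refine le_trans ?_ (height_comap_C_add_finrank_linearFormsSpan_le κ P hκ)
  obtain ⟨c, hc⟩ := ENat.ne_top_iff_exists.1 hlt.ne_top
  rw [← hc] at hrank ⊢
  norm_cast at hrank ⊢
  omega

end ConditionG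

section RegularSequences

open RingTheory.Sequence

theorem SatisfiesG.isWeaklyRegular_linearForms {R E : Type*} [CommRing R] [IsDomain R]
    [IsRegularRing R] [AddCommGroup E] [Module R E] {n e s : ℕ} (hG : SatisfiesG R E e s)
    (hns : n ≤ s) {φ : Matrix (Fin (n + e)) (Fin n) R} (hinj : Function.Injective φ.mulVecLin)
    {π : (Fin (n + e) → R) →ₗ[R] E} (hsurj : Function.Surjective π)
    (hker : LinearMap.ker π = LinearMap.range φ.mulVecLin) :
    IsWeaklyRegular (MvPolynomial (Fin (n + e)) R)
      (List.ofFn fun j => ∑ i, C (φ i j) * X i) := by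
  set y : Fin n → MvPolynomial (Fin (n + e)) R := fun j => ∑ i, C (φ i j) * X i
  refine isWeaklyRegular_of_forall_length_le_height fun rs hrs P _ hP => ?_
  have hlen : rs.length ≤ n := by simpa using hrs.length_le
  have hmem (j : Fin n) (hj : j.val < rs.length) : y j ∈ rs := by
    have hy : rs[j.val] = y j := by rw [hrs.getElem hj, List.getElem_ofFn]
    exact hy ▸ List.getElem_mem hj
  have hcard : (Finset.univ.map (Fin.castLEEmb hlen)).card = rs.length := by simp
  rw [← hcard]
  refine hG.card_le_height hinj hsurj hker (by omega) fun j hj => mem_linearFormsIn.2 ?_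
  obtain ⟨i, -, rfl⟩ := Finset.mem_map.1 hj
  exact hP (Ideal.subset_span (hmem (Fin.castLEEmb hlen i) i.isLt))

lemma isWeaklyRegular_map_X {σ R : Type*} [CommRing R] {l : List σ} (hl : l.Nodup) :
    IsWeaklyRegular (MvPolynomial σ R) (l.map (X (R := R))) := by
  induction l using List.reverseRecOn with
  | nil => exact .nil _ _
  | append_singleton l a ih =>
    obtain ⟨hl, -, hal⟩ := List.nodup_append.1 hl
    rw [List.map_append, List.map_singleton, isWeaklyRegular_append_singleton_iff]
    refine ⟨ih hl, (isSMulRegular_quotient_iff_mem_of_smul_mem _ _).2 fun g hg => ?_⟩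
    have hspan : Ideal.ofList (l.map (X (R := R))) =
        Ideal.span (X '' {i | i ∈ l}) := congrArg Ideal.span (Set.ext fun _ => List.mem_map)
    rw [hspan, mem_ideal_span_X_image] at hg ⊢
    intro m hm
    obtain ⟨i, hi, hmi⟩ := hg (m + Finsupp.single a 1) (by
      rwa [mem_support_iff, smul_eq_mul, mul_comm, coeff_mul_X, ← mem_support_iff])
    refine ⟨i, hi, ?_⟩
    simpa [Finsupp.single_apply, (hal i hi a (by simp)).symm] using hmi

end RegularSequences

section WeightedHomogeneous

variable {R σ : Type*} [CommRing R]

attribute [local instance] weightedGradedAlgebra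

lemma weightedHomogeneousComponent_mul_of_isWeightedHomogeneous {w : σ → ℕ}
    {D : MvPolynomial σ R} {δ j : ℕ} (hD : D.IsWeightedHomogeneous w δ) (hj : δ ≤ j)
    (c : MvPolynomial σ R) :
    weightedHomogeneousComponent w j (c * D) = weightedHomogeneousComponent w (j - δ) c * D := by
  have h := DirectSum.coe_decompose_mul_of_right_mem_of_le (weightedHomogeneousSubmodule R w)
    (a := c) hD hj
  rwa [← weightedDecomposition.decompose'_apply, ← weightedDecomposition.decompose'_apply]

lemma exists_sub_mul_mem_of_mem_sup_span {w : σ → ℕ} {L : Ideal (MvPolynomial σ R)}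
    (hL : L.IsHomogeneous (weightedHomogeneousSubmodule R w)) {D g : MvPolynomial σ R} {δ j : ℕ}
    (hD : D.IsWeightedHomogeneous w δ) (hj : δ ≤ j) (hg : g.IsWeightedHomogeneous w j)
    (hgD : g ∈ L ⊔ Ideal.span {D}) :
    ∃ c : MvPolynomial σ R, c.IsWeightedHomogeneous w (j - δ) ∧ g - c * D ∈ L := by
  obtain ⟨l, hl, _, hcD, rfl⟩ := Submodule.mem_sup.1 hgD
  obtain ⟨c, rfl⟩ := Ideal.mem_span_singleton'.1 hcD
  refine ⟨weightedHomogeneousComponent w (j - δ) c,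
    weightedHomogeneousComponent_isWeightedHomogeneous _ _, ?_⟩
  rw [← weightedHomogeneousComponent_mul_of_isWeightedHomogeneous hD hj,
    ← hg.weightedHomogeneousComponent_same, map_add, add_sub_cancel_right]
  exact weightedHomogeneousComponent_mem_of_mem R w hL hl j

lemma isWeightedHomogeneous_det {M ν : Type*} [AddCommMonoid M] [Fintype ν] [DecidableEq ν]
    {w : σ → M} {δ : ν → M} {A : Matrix ν ν (MvPolynomial σ R)}
    (hA : ∀ i j, (A i j).IsWeightedHomogeneous w (δ j)) :
    A.det.IsWeightedHomogeneous w (∑ j, δ j) := by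
  rw [Matrix.det_apply]
  refine .sum _ _ _ fun τ _ => ?_
  exact (weightedHomogeneousSubmodule R w _).smul_of_tower_mem (Equiv.Perm.sign τ)
    (.prod _ _ _ fun i _ => hA _ _)

lemma isWeightedHomogeneous_map_weight {M M' : Type*} [AddCommMonoid M] [AddCommMonoid M']
    {w : σ → M} {p : MvPolynomial σ R} {m : M} (f : M →+ M') (hp : p.IsWeightedHomogeneous w m) :
    p.IsWeightedHomogeneous (f ∘ w) (f m) := fun c hc => by
  rw [← hp hc, Finsupp.weight_apply, Finsupp.weight_apply, map_finsuppSum]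
  simp

end WeightedHomogeneous

section Strands

variable {k : Type} [Field k] {d n : ℕ} {L : Ideal (B k d n)}

lemma isWeightedHomogeneous_wx_of_bwt {g : B k d n} {p : ℕ × ℕ}
    (hg : g.IsWeightedHomogeneous (bwt d n) p) : g.IsWeightedHomogeneous (wx d n) p.1 := by
  have hwx : wx d n = AddMonoidHom.fst ℕ ℕ ∘ bwt d n := by
    ext (i | i) <;> rfl
  exact hwx ▸ isWeightedHomogeneous_map_weight (AddMonoidHom.fst ℕ ℕ) hg

lemma weight_wx_eq_zero_iff {m : Fin d ⊕ Fin n →₀ ℕ} :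
    Finsupp.weight (wx d n) m = 0 ↔ ∀ i, m (Sum.inl i) = 0 := by
  simp [Finsupp.weight_apply, Finsupp.sum_fintype, wx]

lemma isWeightedHomogeneous_wx_zero_iff {g : B k d n} :
    g.IsWeightedHomogeneous (wx d n) 0 ↔ ∃ c, algebraMap (T k n) (B k d n) c = g := by
  constructor
  · intro hg
    refine exists_rename_eq_of_vars_subset_range g Sum.inr Sum.inr_injective ?_
    rintro (i | j) hs
    · obtain ⟨m, hm, hi⟩ := (mem_vars_iff_mem_support _).1 hs
      have := weight_wx_eq_zero_iff.1 (hg (mem_support_iff.1 hm)) i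
      exact absurd this (Finsupp.mem_support_iff.1 hi)
    · exact ⟨j, rfl⟩
  · rintro ⟨c, rfl⟩ m hm
    obtain ⟨u, rfl, -⟩ := coeff_rename_ne_zero _ _ _ hm
    exact weight_wx_eq_zero_iff.2 fun i => Finsupp.mapDomain_of_notMem_range _ _ (by simp)

lemma mem_mxB_of_isWeightedHomogeneous {g : B k d n} {j : ℕ} (hj : j ≠ 0)
    (hg : g.IsWeightedHomogeneous (wx d n) j) : g ∈ mxB k d n := by
  have hspan : mxB k d n = Ideal.span (X '' Set.range Sum.inl) := by
    rw [mxB, ← Set.range_comp]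
    rfl
  rw [hspan, mem_ideal_span_X_image]
  intro m hm
  have hne : Finsupp.weight (wx d n) m ≠ 0 := (hg (mem_support_iff.1 hm)).symm ▸ hj
  simpa using mt weight_wx_eq_zero_iff.2 hne

lemma mem_colon_mxB_iff {g : B k d n} :
    g ∈ L.colon (mxB k d n : Set (B k d n)) ↔ ∀ i, g * X (Sum.inl i) ∈ L := by
  rw [mxB, Submodule.colon_span, Submodule.mem_colon, Set.forall_mem_range]
  rfl

lemma mk_mem_H0_iff {g : B k d n} :
    Ideal.Quotient.mk L g ∈ H0 k d n L ↔ ∃ N : ℕ, g ∈ L.colon (mxB k d n ^ N : Ideal _) := by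
  rw [H0, Submodule.mem_iSup_of_directed]
  · simp only [Submodule.mem_torsionBySet_iff, Subtype.forall, Submodule.mem_colon]
    refine exists_congr fun N => forall₂_congr fun a _ => ?_
    rw [smul_eq_mul, mul_comm]
    exact Ideal.Quotient.eq_zero_iff_mem (I := L)
  · exact Monotone.directed_le fun N M hNM =>
      Submodule.torsionBySet_le_torsionBySet_of_subset (Ideal.pow_le_pow_right hNM)

lemma mem_SxDeg_iff {j : ℕ} {z : B k d n ⧸ L} :
    z ∈ SxDeg k d n L j ↔
      ∃ g : B k d n, g.IsWeightedHomogeneous (wx d n) j ∧ Ideal.Quotient.mk L g = z := by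
  refine ⟨fun hz => ?_, fun hz => Submodule.subset_span hz⟩
  induction hz using Submodule.span_induction with
  | mem _ hx => exact hx
  | zero => exact ⟨0, isWeightedHomogeneous_zero _ _ _, map_zero _⟩
  | add _ _ _ _ hx hy =>
    obtain ⟨⟨g, hg, rfl⟩, h, hh, rfl⟩ := hx, hy
    exact ⟨g + h, hg.add hh, map_add _ _ _⟩
  | smul c _ _ hx =>
    obtain ⟨g, hg, rfl⟩ := hx
    refine ⟨algebraMap (T k n) (B k d n) c * g, ?_, ?_⟩
    · simpa using (isWeightedHomogeneous_wx_zero_iff.2 ⟨c, rfl⟩).mul hg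
    · exact congrArg (Ideal.Quotient.mk L) (Algebra.smul_def c g).symm

attribute [local instance] weightedGradedAlgebra

variable {D : B k d n} {δ j : ℕ}

lemma mem_of_mem_colon_mxB_pow (hL : L.IsHomogeneous (weightedHomogeneousSubmodule k (wx d n)))
    (hD : D.IsWeightedHomogeneous (wx d n) δ)
    (hcolon : L.colon (mxB k d n : Set (B k d n)) = L ⊔ Ideal.span {D}) (hj : δ < j) {g : B k d n}
    (hg : g.IsWeightedHomogeneous (wx d n) j) {N : ℕ}
    (hgN : g ∈ L.colon (mxB k d n ^ N : Ideal _)) : g ∈ L := by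
  induction N generalizing g j with
  | zero => simpa using hgN
  | succ N ih =>
    have hgm : g ∈ L.colon (mxB k d n : Set (B k d n)) := by
      refine mem_colon_mxB_iff.2 fun i => ih (hj.trans j.lt_succ_self)
        (hg.mul (isWeightedHomogeneous_X k (wx d n) (Sum.inl i))) ?_
      refine Submodule.mem_colon.2 fun a ha => ?_
      rw [smul_eq_mul, mul_right_comm, mul_assoc]
      refine Submodule.mem_colon.1 hgN _ ?_
      exact pow_succ (mxB k d n) N ▸ Ideal.mul_mem_mul ha (Ideal.subset_span ⟨i, rfl⟩)
    obtain ⟨c, hc, hgc⟩ := exists_sub_mul_mem_of_mem_sup_span hL hD hj.le hg (hcolon ▸ hgm)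
    have hDm : D ∈ L.colon (mxB k d n : Set (B k d n)) :=
      hcolon ▸ Ideal.mem_sup_right (Ideal.mem_span_singleton_self D)
    have hcm : c ∈ mxB k d n := mem_mxB_of_isWeightedHomogeneous (Nat.sub_ne_zero_of_lt hj) hc
    have hcD : c * D ∈ L := mul_comm D c ▸ Submodule.mem_colon.1 hDm c hcm
    exact (L.sub_mem_iff_left hcD).1 hgc

theorem AcompZ_eq_span_of_colon_eq_sup
    (hL : L.IsHomogeneous (weightedHomogeneousSubmodule k (wx d n)))
    (hD : D.IsWeightedHomogeneous (wx d n) δ)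
    (hcolon : L.colon (mxB k d n : Set (B k d n)) = L ⊔ Ideal.span {D}) :
    AcompZ k d n L δ = Submodule.span (T k n) {Ideal.Quotient.mk L D} := by
  have hDm : D ∈ L.colon (mxB k d n : Set (B k d n)) :=
    hcolon ▸ Ideal.mem_sup_right (Ideal.mem_span_singleton_self D)
  rw [AcompZ, SxDegZ, if_pos δ.cast_nonneg, Int.toNat_natCast]
  apply le_antisymm
  · rintro _ ⟨hz, hzδ⟩
    obtain ⟨g, hg, rfl⟩ := mem_SxDeg_iff.1 hzδ
    obtain ⟨N, hgN⟩ := mk_mem_H0_iff.1 hz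
    have hgm : g ∈ L.colon (mxB k d n : Set (B k d n)) := by
      refine mem_colon_mxB_iff.2 fun i => mem_of_mem_colon_mxB_pow hL hD hcolon δ.lt_succ_self
        (hg.mul (isWeightedHomogeneous_X k (wx d n) (Sum.inl i))) (N := N) ?_
      exact Ideal.mul_mem_right _ _ hgN
    obtain ⟨c, hc, hgc⟩ := exists_sub_mul_mem_of_mem_sup_span hL hD le_rfl hg (hcolon ▸ hgm)
    obtain ⟨c, rfl⟩ := isWeightedHomogeneous_wx_zero_iff.1 (δ.sub_self ▸ hc)
    refine Submodule.mem_span_singleton.2 ⟨c, ?_⟩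
    rw [Ideal.Quotient.eq.2 hgc]
    exact congrArg (Ideal.Quotient.mk L) (Algebra.smul_def c D)
  · rw [Submodule.span_le, Set.singleton_subset_iff]
    exact ⟨mk_mem_H0_iff.2 ⟨1, (pow_one (mxB k d n)).symm ▸ hDm⟩, mem_SxDeg_iff.2 ⟨D, hD, rfl⟩⟩

end Strands

section JacobianDual

open RingTheory.Sequence
open scoped Matrix

attribute [local instance] weightedGradedAlgebra

lemma isWeaklyRegular_map_ringEquiv {A A' : Type*} [CommRing A] [CommRing A'] (f : A ≃+* A')
    {l : List A} (hl : IsWeaklyRegular A l) : IsWeaklyRegular A' (l.map f) := by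
  have hf : List.Forall₂ (fun a b => ∀ x, f.toAddEquiv (a • x) = b • f.toAddEquiv x) l (l.map f) :=
    List.forall₂_map_right_iff.2 (List.forall₂_same.2 fun a _ => map_mul f a)
  exact (AddEquiv.isWeaklyRegular_congr hf).1 hl

/-- The identification `k[x, y] ≃ k[x][y]`. -/
def iterEquiv (σ τ R : Type*) [CommRing R] :
    MvPolynomial (σ ⊕ τ) R ≃+* MvPolynomial τ (MvPolynomial σ R) :=
  ((renameEquiv R (Equiv.sumComm σ τ)).trans (sumAlgEquiv R τ σ)).toRingEquiv

lemma iterEquiv_symm_X {σ τ R : Type*} [CommRing R] (j : τ) :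
    (iterEquiv σ τ R).symm (X j) = X (Sum.inr j) :=
  (iterEquiv σ τ R).symm_apply_eq.2 (by simp [iterEquiv])

lemma iterEquiv_symm_C {σ τ R : Type*} [CommRing R] (p : MvPolynomial σ R) :
    (iterEquiv σ τ R).symm (C p) = rename Sum.inl p := by
  refine (iterEquiv σ τ R).symm_apply_eq.2 ?_
  induction p using MvPolynomial.induction_on with
  | C a => simp [iterEquiv]
  | add p q hp hq => rw [C_add, hp, hq, map_add, map_add]
  | mul_X p i hp => rw [C_mul, hp, map_mul, map_mul]; simp [iterEquiv]

variable {k : Type} [Field k] {d n e : ℕ}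

theorem SatisfiesG.isWeaklyRegular_relations {E : Type*} [AddCommGroup E]
    [Module (MvPolynomial (Fin d) k) E] (hG : SatisfiesG (MvPolynomial (Fin d) k) E e d)
    {φ : Matrix (Fin (d + e)) (Fin d) (MvPolynomial (Fin d) k)}
    (hinj : Function.Injective φ.mulVecLin)
    {π : (Fin (d + e) → MvPolynomial (Fin d) k) →ₗ[MvPolynomial (Fin d) k] E}
    (hsurj : Function.Surjective π) (hker : LinearMap.ker π = LinearMap.range φ.mulVecLin)
    {ℓ : Fin d → B k d (d + e)}
    (hℓ : ∀ i, ℓ i = ∑ j, rename Sum.inl (φ j i) * X (Sum.inr j)) :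
    IsWeaklyRegular (B k d (d + e)) (List.ofFn ℓ) := by
  have hsymm : ℓ = (iterEquiv (Fin d) (Fin (d + e)) k).symm ∘ fun j => ∑ i, C (φ i j) * X i := by
    ext1 j
    simp [hℓ, iterEquiv_symm_X, iterEquiv_symm_C]
  rw [hsymm, ← List.map_ofFn]
  exact isWeaklyRegular_map_ringEquiv _ (hG.isWeaklyRegular_linearForms le_rfl hinj hsurj hker)

lemma isWeaklyRegular_X_inl :
    IsWeaklyRegular (B k d n) (List.ofFn fun i => (X (Sum.inl i) : B k d n)) := by
  rw [← Function.comp_def, ← List.map_ofFn]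
  exact isWeaklyRegular_map_X (List.nodup_ofFn.2 Sum.inl_injective)

lemma isHomogeneous_span_range_vecMul_X {δ : Fin d → ℕ} {M : Matrix (Fin d) (Fin d) (B k d n)}
    (hM : ∀ i j, (M i j).IsWeightedHomogeneous (wx d n) (δ j)) :
    (Ideal.span (Set.range ((fun i => X (Sum.inl i)) ᵥ* M))).IsHomogeneous
      (weightedHomogeneousSubmodule k (wx d n)) := by
  refine Ideal.homogeneous_span _ _ ?_
  rintro _ ⟨j, rfl⟩
  exact ⟨1 + δ j, .sum _ _ _ fun i _ => (isWeightedHomogeneous_X k _ (Sum.inl i)).mul (hM i j)⟩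

theorem A2_generator_general {E : Type*} [AddCommGroup E] [Module (MvPolynomial (Fin d) k) E]
    {φ : Matrix (Fin (d + e)) (Fin d) (MvPolynomial (Fin d) k)}
    (hinj : Function.Injective φ.mulVecLin)
    {π : (Fin (d + e) → MvPolynomial (Fin d) k) →ₗ[MvPolynomial (Fin d) k] E}
    (hsurj : Function.Surjective π) (hker : LinearMap.ker π = LinearMap.range φ.mulVecLin)
    (hG : SatisfiesG (MvPolynomial (Fin d) k) E e d) {ℓ : Fin d → B k d (d + e)}
    (hℓ : ∀ i, ℓ i = ∑ j, rename Sum.inl (φ j i) * X (Sum.inr j))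
    {Bφ : Matrix (Fin d) (Fin d) (B k d (d + e))} {δ : Fin d → ℕ}
    (hBφhom : ∀ t j, Bφ t j ∈ weightedHomogeneousSubmodule k (bwt d (d + e)) (δ j, 1))
    (hBφ : ∀ j, ℓ j = ∑ t, X (Sum.inl t) * Bφ t j) :
    AcompZ k d (d + e) (Ideal.span (Set.range ℓ)) (∑ j, δ j : ℕ) =
        Submodule.span (T k (d + e)) {Ideal.Quotient.mk (Ideal.span (Set.range ℓ)) Bφ.det} ∧
      Bφ.det ∈ weightedHomogeneousSubmodule k (bwt d (d + e)) (∑ j, δ j, d) := by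
  obtain rfl : ℓ = (fun i => X (Sum.inl i)) ᵥ* Bφ := funext hBφ
  have hdet : Bφ.det.IsWeightedHomogeneous (bwt d (d + e)) (∑ j, δ j, d) := by
    simpa [← prod_mk_sum] using isWeightedHomogeneous_det hBφhom
  have hhom := isHomogeneous_span_range_vecMul_X fun t j =>
    isWeightedHomogeneous_wx_of_bwt (hBφhom t j)
  have hcolon := colon_span_range_vecMul isWeaklyRegular_X_inl
    (hG.isWeaklyRegular_relations hinj hsurj hker hℓ)
  rw [← Submodule.colon_span] at hcolon
  exact ⟨AcompZ_eq_span_of_colon_eq_sup hhom (isWeightedHomogeneous_wx_of_bwt hdet) hcolon, hdet⟩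

lemma sum_ite_val_lt_sub_two (hd : 2 ≤ d) : ∑ j : Fin d, (if j.val < d - 2 then 0 else 1) = 2 := by
  obtain ⟨m, rfl⟩ := Nat.exists_eq_add_of_le' hd
  simp [Fin.sum_univ_castSucc]

end JacobianDual

theorem A2_generator
    (d e : ℕ) (hd : 3 ≤ d)
    (E : Type) [AddCommGroup E] [Module (MvPolynomial (Fin d) k) E]
    [Module.Finite (MvPolynomial (Fin d) k) E]
    -- `E` is torsion-free
    (htf : Submodule.torsion (MvPolynomial (Fin d) k) E = ⊥)
    -- `0 → R^d →φ R^{d+e} →π E → 0` is a (minimal) free resolution, so `pd E = 1`,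
    -- `rank E = e`
    (φ : Matrix (Fin (d + e)) (Fin d) (MvPolynomial (Fin d) k))
    (hinj : Function.Injective φ.mulVecLin)
    (π : (Fin (d + e) → MvPolynomial (Fin d) k) →ₗ[MvPolynomial (Fin d) k] E)
    (hsurj : Function.Surjective π)
    (hker : LinearMap.ker π = LinearMap.range φ.mulVecLin)
    -- `φ = [φ′ | φ″]`: the first `d−2` columns are linear, the last two are quadrics
    (hdeg : ∀ (i : Fin (d + e)) (j : Fin d),
      ((j : ℕ) < d - 2 → φ i j ∈ homogeneousSubmodule (Fin d) k 1) ∧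
      (d - 2 ≤ (j : ℕ) → φ i j ∈ homogeneousSubmodule (Fin d) k 2))
    -- `I_1(φ) = (x_1,…,x_d)`
    (hI1 : Ideal.span {r : MvPolynomial (Fin d) k | ∃ i j, φ i j = r} =
      Ideal.span (Set.range X))
    -- `E` is minimally generated by `μ(E) = d+e` elements
    (hμ : ∀ s : Finset E, Submodule.span (MvPolynomial (Fin d) k) (s : Set E) = ⊤ →
      d + e ≤ s.card)
    -- `E` satisfies `G_d`
    (hGd : ∀ (p : Ideal (MvPolynomial (Fin d) k)) (_ : p.IsPrime) (c : ℕ),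
      ringKrullDim (Localization.AtPrime p) = (c : WithBot ℕ∞) → 1 ≤ c → c ≤ d - 1 →
      ∃ s : Finset (LocalizedModule p.primeCompl E), s.card ≤ c + e - 1 ∧
        Submodule.span (Localization.AtPrime p)
          (s : Set (LocalizedModule p.primeCompl E)) = ⊤)
    -- the defining ideal `L` of the symmetric algebra: `[ℓ_1 … ℓ_d] = [y_1 … y_{d+e}]·φ`
    (ℓ : Fin d → B k d (d + e))
    (hℓ : ∀ i, ℓ i = ∑ j, (rename Sum.inl (φ j i)) * X (Sum.inr j))
    (L : Ideal (B k d (d + e))) (hL : L = Ideal.span (Set.range ℓ))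
    -- `B(φ)`: a Jacobian dual of `φ` with respect to `x_1,…,x_d`, i.e. a `d×d` matrix of
    -- bihomogeneous elements with `[y_1 … y_{d+e}]·φ = [x_1 … x_d]·B(φ)`
    (Bφ : Matrix (Fin d) (Fin d) (B k d (d + e)))
    (hBφhom : ∀ (t j : Fin d),
      ((j : ℕ) < d - 2 → Bφ t j ∈ weightedHomogeneousSubmodule k (bwt d (d + e)) (0, 1)) ∧
      (d - 2 ≤ (j : ℕ) → Bφ t j ∈ weightedHomogeneousSubmodule k (bwt d (d + e)) (1, 1)))
    (hBφ : ∀ j, ℓ j = ∑ t, X (Sum.inl t) * Bφ t j) :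
    AcompZ k d (d + e) L 2 =
      Submodule.span (T k (d + e)) {Ideal.Quotient.mk L Bφ.det} ∧
    Bφ.det ∈ weightedHomogeneousSubmodule k (bwt d (d + e)) (2, d) := by
  have hBφδ (t j) : Bφ t j ∈
      weightedHomogeneousSubmodule k (bwt d (d + e)) (if j.val < d - 2 then 0 else 1, 1) := by
    split_ifs with hj
    exacts [(hBφhom t j).1 hj, (hBφhom t j).2 (not_lt.1 hj)]
  have h := A2_generator_general hinj hsurj hker hGd hℓ hBφδ hBφ
  rwa [sum_ite_val_lt_sub_two (Nat.le_of_succ_le hd), ← hL] at h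

end Stmt9
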